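/- arXiv:2309.01119 — 2 statements merged into one kernel-verified Lean document; each statement's English description precedes it below -/
import Mathlib

section
/- Let T = {0, u₁, u₂} ⊆ V with u₁, u₂ linearly independent. Then the number of non-constant codewords of RM_q(1,m) vanishing on all of T is q^{m-2} − 1; vanishing on exactly two points of T is 3q^{m-2}(q-1); vanishing on exactly one point is 3q^{m-2}(q-1)²; and vanishing on no point of T is (q-1)(q^m − 2q^{m-1} + q^{m-2} − 1). -/
/-!
Evaluation at `n` affinely independent points is a surjective linear map from the space of affine
functions, of dimension `d + 1`, onto `F ^ n`. Hence every value vector is attained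
`q ^ (d + 1 - n)` times, and exactly `n.choose k * (q - 1) ^ (n - k)` value vectors have `k` zero
entries. It remains to discard the constants: zero vanishes at all `n` points, the others at none.
-/

open Module

section FiberCounting

@[to_additive]
theorem ncard_preimage_of_surjective_monoidHom {G H : Type*} [Group G] [Group H] {f : G →* H}
    (hf : Function.Surjective f) (S : Set H) :
    (f ⁻¹' S).ncard = Nat.card f.ker * S.ncard := by
  let e : G ⧸ f.ker ≃* H := QuotientGroup.quotientKerEquivOfSurjective f hf
  calc (f ⁻¹' S).ncard = Nat.card (QuotientGroup.mk ⁻¹' (e ⁻¹' S) : Set G) := rfl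
    _ = Nat.card f.ker * Nat.card (e ⁻¹' S) := by
      rw [Nat.card_congr (QuotientGroup.preimageMkEquivSubgroupProdSet _ _), Nat.card_prod]
    _ = Nat.card f.ker * S.ncard := by
      rw [Nat.card_preimage_of_injective e.injective (by simp [e.surjective.range_eq]),
        Nat.card_coe_set_eq]

theorem ncard_preimage_of_surjective_linearMap {K M N : Type*} [DivisionRing K]
    [AddCommGroup M] [Module K M] [Module.Finite K M] [AddCommGroup N] [Module K N]
    {f : M →ₗ[K] N} (hf : Function.Surjective f) (S : Set N) :
    (f ⁻¹' S).ncard = Nat.card K ^ (finrank K M - finrank K N) * S.ncard := by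
  have finrank_ker : finrank K M - finrank K N = finrank K f.ker := by
    rw [← f.finrank_range_add_finrank_ker, LinearMap.range_eq_top.2 hf, finrank_top,
      Nat.add_sub_cancel_left]
  rw [finrank_ker, ← natCard_eq_pow_finrank]
  exact ncard_preimage_of_surjective_addMonoidHom (f := f.toAddMonoidHom) hf S

end FiberCounting

section WordCounting

variable {ι α : Type*} [Fintype ι] [Finite α] [Zero α]

theorem ncard_pi_zeros_eq (Z : Finset ι) :
    {y : ι → α | {i | y i = 0} = (Z : Set ι)}.ncard =
      (Nat.card α - 1) ^ (Fintype.card ι - Z.card) := by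
  classical
  have := Fintype.ofFinite α
  have eq_piFinset : {y : ι → α | {i | y i = 0} = (Z : Set ι)} =
      Fintype.piFinset fun i => if i ∈ Z then {(0 : α)} else {0}ᶜ := by
    ext y
    simp only [Set.ext_iff, Set.mem_ofPred_eq, Finset.mem_coe, Fintype.mem_piFinset]
    refine forall_congr' fun i => ?_
    split_ifs with hi <;> simp [hi]
  rw [eq_piFinset, Set.ncard_coe_finset, Fintype.card_piFinset]
  simp only [apply_ite Finset.card, Finset.card_singleton, Finset.card_compl, Finset.prod_ite,
    Finset.prod_const_one, one_mul, Finset.prod_const, Nat.card_eq_fintype_card]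
  rw [← Finset.card_compl, Finset.compl_eq_univ_sdiff, Finset.sdiff_eq_filter]

theorem ncard_pi_ncard_zeros_eq (k : ℕ) :
    {y : ι → α | {i | y i = 0}.ncard = k}.ncard =
      (Fintype.card ι).choose k * (Nat.card α - 1) ^ (Fintype.card ι - k) := by
  classical
  have partition_by_zeros : {y : ι → α | {i | y i = 0}.ncard = k} =
      ⋃ Z ∈ Finset.powersetCard k (Finset.univ : Finset ι),
        {y : ι → α | {i | y i = 0} = (Z : Set ι)} := by
    ext y
    simp only [Set.mem_ofPred_eq, Set.mem_iUnion, Finset.mem_powersetCard_univ, exists_prop]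
    constructor
    · rintro rfl
      exact ⟨{i | y i = 0}.toFinset, (Set.ncard_eq_toFinset_card' _).symm, by simp⟩
    · rintro ⟨Z, rfl, hZ⟩
      rw [hZ, Set.ncard_coe_finset]
  have disjoint_by_zeros : Set.PairwiseDisjoint (Finset.powersetCard k (Finset.univ : Finset ι))
      fun Z : Finset ι => {y : ι → α | {i | y i = 0} = (Z : Set ι)} :=
    fun Z _ Z' _ hne => Set.disjoint_left.2 fun y (hZ : {i | y i = 0} = (Z : Set ι)) hZ' =>
      hne (Finset.coe_inj.1 (hZ.symm.trans hZ'))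
  calc {y : ι → α | {i | y i = 0}.ncard = k}.ncard
      = ∑ Z ∈ Finset.powersetCard k (Finset.univ : Finset ι),
          {y : ι → α | {i | y i = 0} = (Z : Set ι)}.ncard := by
        rw [partition_by_zeros, ← finsum_mem_coe_finset]
        exact (Finset.finite_toSet _).ncard_biUnion (fun _ _ => Set.toFinite _) disjoint_by_zeros
    _ = ∑ Z ∈ Finset.powersetCard k (Finset.univ : Finset ι),
          (Nat.card α - 1) ^ (Fintype.card ι - k) :=
        Finset.sum_congr rfl fun Z hZ => by
          rw [ncard_pi_zeros_eq, Finset.mem_powersetCard_univ.1 hZ]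
    _ = (Fintype.card ι).choose k * (Nat.card α - 1) ^ (Fintype.card ι - k) := by
        rw [Finset.sum_const, Finset.card_powersetCard, Finset.card_univ, smul_eq_mul]

end WordCounting

section AffineEvaluation

section DivisionRing

variable {K V P W ι : Type*} [DivisionRing K] [AddCommGroup V] [Module K V] [AddTorsor V P]
  [AddCommGroup W] [Module K W]

theorem exists_linearMap_eq_of_linearIndependent {v : ι → V} (hv : LinearIndependent K v)
    (a : ι → W) : ∃ g : V →ₗ[K] W, ∀ i, g (v i) = a i := by
  obtain ⟨g, hg⟩ := ((Basis.span hv).constr ℕ a).exists_extend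
  refine ⟨g, fun i => ?_⟩
  have := LinearMap.congr_fun hg (Basis.span hv i)
  rwa [LinearMap.comp_apply, Basis.constr_basis, Submodule.subtype_apply, Basis.span_apply] at this

theorem exists_affineMap_eq_of_affineIndependent {p : ι → P}
    (hp : AffineIndependent K p) (a : ι → W) : ∃ f : P →ᵃ[K] W, ∀ i, f (p i) = a i := by
  cases isEmpty_or_nonempty ι with
  | inl => exact ⟨0, isEmptyElim⟩
  | inr hι =>
    obtain ⟨i₀⟩ := hι
    obtain ⟨g, hg⟩ := exists_linearMap_eq_of_linearIndependent
      ((affineIndependent_iff_linearIndependent_vsub K p i₀).1 hp) fun i => a i - a i₀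
    refine ⟨g.toAffineMap.comp (AffineEquiv.vaddConst K (p i₀)).symm.toAffineMap +
      AffineMap.const K P (a i₀), fun i => ?_⟩
    by_cases hi : i = i₀
    · simp [hi]
    · simp [hg ⟨i, hi⟩]

end DivisionRing

/-- Evaluation of affine maps at the points `p i`, as a linear map. When `W = K` and the `p i`
exhaust `P`, its range is the first-order Reed-Muller code; in general it is that code restricted to
the coordinates `p i`. -/
def affineEval {V P ι : Type*} (K W : Type*) [CommRing K] [AddCommGroup V] [Module K V]
    [AddTorsor V P] [AddCommGroup W] [Module K W] (p : ι → P) : (P →ᵃ[K] W) →ₗ[K] ι → W where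
  toFun f i := f (p i)
  map_add' _ _ := rfl
  map_smul' _ _ := rfl

theorem affineEval_surjective {K V P W ι : Type*} [Field K] [AddCommGroup V] [Module K V]
    [AddTorsor V P] [AddCommGroup W] [Module K W] {p : ι → P} (hp : AffineIndependent K p) :
    Function.Surjective (affineEval K W p) := fun a =>
  (exists_affineMap_eq_of_affineIndependent hp a).imp fun _ hf => funext hf

end AffineEvaluation

section AffineCounting

theorem ncard_affineMap_const_ncard_zeros_eq {R V P ι : Type*} [Ring R] [Finite R] [AddCommGroup V]
    [Module R V] [AddTorsor V P] [Fintype ι] (p : ι → P) (k : ℕ) :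
    {f : P →ᵃ[R] R | f.linear = 0 ∧ {i | f (p i) = 0}.ncard = k}.ncard =
      (if k = Fintype.card ι then 1 else 0) + (if k = 0 then Nat.card R - 1 else 0) := by
  have const_injective : Function.Injective (AffineMap.const R P : R → P →ᵃ[R] R) :=
    fun a b hab => by simpa using DFunLike.congr_fun hab (Classical.arbitrary P)
  have eq_image : {f : P →ᵃ[R] R | f.linear = 0 ∧ {i | f (p i) = 0}.ncard = k} =
      AffineMap.const R P '' ({b | b = 0 ∧ k = Fintype.card ι} ∪ {b | b ≠ 0 ∧ k = 0}) := by
    ext f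
    simp only [Set.mem_ofPred_eq, AffineMap.linear_eq_zero_iff_exists_const, Set.mem_image]
    constructor
    · rintro ⟨⟨b, rfl⟩, rfl⟩
      refine ⟨b, ?_, rfl⟩
      by_cases hb : b = 0 <;> simp [hb]
    · rintro ⟨b, ⟨rfl, rfl⟩ | ⟨hb, rfl⟩, rfl⟩
      · simp
      · simp [hb]
  rw [eq_image, Set.ncard_image_of_injective _ const_injective, Set.ncard_union_eq]
  · congr 1
    · split_ifs with hk <;> simp [hk]
    · split_ifs with hk
      · simpa [hk, Set.compl_def] using Set.ncard_compl {(0 : R)}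
      · simp [hk]
  · exact Set.disjoint_left.2 fun b hb hb' => hb'.1 hb.1

variable {F V P ι : Type*} [Field F] [Finite F] [AddCommGroup V] [Module F V] [AddTorsor V P]
  [Fintype ι]

theorem ncard_affineMap_ncard_zeros_eq [Module.Finite F V] {p : ι → P}
    (hp : AffineIndependent F p) (k : ℕ) :
    {f : P →ᵃ[F] F | {i | f (p i) = 0}.ncard = k}.ncard =
      Nat.card F ^ (finrank F V + 1 - Fintype.card ι) *
        ((Fintype.card ι).choose k * (Nat.card F - 1) ^ (Fintype.card ι - k)) := by
  have count := ncard_preimage_of_surjective_linearMap (affineEval_surjective (W := F) hp)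
    {y | {i | y i = 0}.ncard = k}
  rwa [AffineMap.finrank_eq, finrank_self, mul_one, finrank_fintype_fun_eq_card,
    ncard_pi_ncard_zeros_eq] at count

theorem ncard_affineMap_nonconst_ncard_zeros_add [Module.Finite F V] {p : ι → P}
    (hp : AffineIndependent F p) (k : ℕ) :
    {f : P →ᵃ[F] F | f.linear ≠ 0 ∧ {i | f (p i) = 0}.ncard = k}.ncard +
        ((if k = Fintype.card ι then 1 else 0) + (if k = 0 then Nat.card F - 1 else 0)) =
      Nat.card F ^ (finrank F V + 1 - Fintype.card ι) *
        ((Fintype.card ι).choose k * (Nat.card F - 1) ^ (Fintype.card ι - k)) := by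
  have : Finite (P →ᵃ[F] F) := Module.finite_of_finite F
  rw [← ncard_affineMap_ncard_zeros_eq hp, ← ncard_affineMap_const_ncard_zeros_eq p, add_comm,
    ← Set.ncard_union_eq]
  · congr 1
    ext f
    by_cases hf : f.linear = 0 <;> simp [hf]
  · exact Set.disjoint_left.2 fun f hf hf' => hf'.1 hf.1

end AffineCounting

section ThreePoints

theorem pow_sub_two_mul_pow_add_pow {q d : ℕ} (hq : 2 ≤ q) (hd : 2 ≤ d) :
    q ^ d - 2 * q ^ (d - 1) + q ^ (d - 2) = q ^ (d - 2) * (q - 1) ^ 2 := by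
  obtain ⟨r, rfl⟩ := Nat.exists_eq_add_of_le' hq
  obtain ⟨e, rfl⟩ := Nat.exists_eq_add_of_le' hd
  have expand : (r + 2) ^ (e + 2) = 2 * (r + 2) ^ (e + 1) + (r + 2) ^ e * (r * (r + 2)) := by ring
  simp only [Nat.add_sub_cancel, Nat.add_succ_sub_one, expand, Nat.add_sub_cancel_left]
  ring

theorem stmt_6_general {F V P : Type*} [Field F] [Finite F] [AddCommGroup V] [Module F V]
    [Module.Finite F V] [AddTorsor V P] {q d : ℕ} (hq : q = Nat.card F) (hd : d = finrank F V)
    {p : Fin 3 → P} (hp : AffineIndependent F p) :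
    {f : P →ᵃ[F] F | f.linear ≠ 0 ∧ {i | f (p i) = 0}.ncard = 3}.ncard = q ^ (d - 2) - 1 ∧
    {f : P →ᵃ[F] F | f.linear ≠ 0 ∧ {i | f (p i) = 0}.ncard = 2}.ncard =
      3 * q ^ (d - 2) * (q - 1) ∧
    {f : P →ᵃ[F] F | f.linear ≠ 0 ∧ {i | f (p i) = 0}.ncard = 1}.ncard =
      3 * q ^ (d - 2) * (q - 1) ^ 2 ∧
    {f : P →ᵃ[F] F | f.linear ≠ 0 ∧ {i | f (p i) = 0}.ncard = 0}.ncard =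
      (q - 1) * (q ^ d - 2 * q ^ (d - 1) + q ^ (d - 2) - 1) := by
  have two_le_q : 2 ≤ q := hq ▸ Finite.one_lt_card
  have two_le_d : 2 ≤ d := by
    have := hp.card_le_finrank_succ.trans (Nat.succ_le_succ (Submodule.finrank_le _))
    rw [Fintype.card_fin] at this
    omega
  have count := ncard_affineMap_nonconst_ncard_zeros_add hp
  simp only [← hq, ← hd, Fintype.card_fin, Nat.reduceSubDiff] at count
  refine ⟨?_, ?_, ?_, ?_⟩
  · simpa using Nat.eq_sub_of_add_eq (count 3)
  · simpa [mul_comm, mul_left_comm] using count 2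
  · simpa [mul_comm, mul_left_comm] using count 1
  · rw [pow_sub_two_mul_pow_add_pow two_le_q two_le_d, Nat.mul_sub_one]
    refine Nat.eq_sub_of_add_eq ?_
    calc _ = q ^ (d - 2) * (q - 1) ^ 3 := by simpa using count 0
      _ = (q - 1) * (q ^ (d - 2) * (q - 1) ^ 2) := by ring

end ThreePoints

section Codewords

theorem ncard_sep_range_eq {α β : Type*} {p : α → β} (hp : Function.Injective p)
    (s : β → Prop) : {x ∈ Set.range p | s x}.ncard = {i | s (p i)}.ncard := by
  rw [← Set.ncard_image_of_injective _ hp]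
  exact congrArg Set.ncard (Set.image_preimage_eq_range_inter (f := p) (t := {x | s x})).symm

theorem affineIndependent_vecCons_zero {R V : Type*} [Ring R] [AddCommGroup V] [Module R V]
    {n : ℕ} {v : Fin n → V} :
    AffineIndependent R (Matrix.vecCons 0 v) ↔ LinearIndependent R v := by
  rw [affineIndependent_iff_linearIndependent_vsub R _ 0,
    ← linearIndependent_equiv (finSuccAboveEquiv (0 : Fin (n + 1)))]
  congr! 1
  ext1 i
  simp [finSuccAboveEquiv_apply]

theorem nonconst_eq_image_affineMap {R V W : Type*} [Ring R] [AddCommGroup V] [Module R V]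
    [AddCommGroup W] [Module R W] :
    {c : V → W | ∃ l : V →ₗ[R] W, l ≠ 0 ∧ ∃ b : W, c = fun x => l x + b} =
      ((⇑) : (V →ᵃ[R] W) → V → W) '' {f | f.linear ≠ 0} := by
  ext c
  constructor
  · rintro ⟨l, hl, b, rfl⟩
    exact ⟨l.toAffineMap + AffineMap.const R V b, by simpa using hl, rfl⟩
  · rintro ⟨f, hf, rfl⟩
    exact ⟨f.linear, hf, f 0, f.decomp⟩

theorem ncard_nonconst_eq_ncard_affineMap {R V W ι : Type*} [Ring R] [AddCommGroup V]
    [Module R V] [AddCommGroup W] [Module R W] {p : ι → V} (hp : Function.Injective p) (k : ℕ) :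
    {c ∈ {c : V → W | ∃ l : V →ₗ[R] W, l ≠ 0 ∧ ∃ b : W, c = fun x => l x + b} |
        {x ∈ Set.range p | c x = 0}.ncard = k}.ncard =
      {f : V →ᵃ[R] W | f.linear ≠ 0 ∧ {i | f (p i) = 0}.ncard = k}.ncard := by
  rw [← Set.ncard_image_of_injective _ AffineMap.coeFn_injective, nonconst_eq_image_affineMap]
  simp only [ncard_sep_range_eq hp]
  exact congrArg Set.ncard (Set.image_inter_preimage _ _ _).symm

end Codewords

/-- Counts of non-constant codewords of `RM_q(1,m)` by number of zeros on
`T = {0, u₁, u₂}` with `u₁, u₂` linearly independent. -/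
theorem stmt_6 (F : Type) [Field F] [Fintype F] (q m : ℕ) (hq : q = Fintype.card F)
    (hm : 2 ≤ m) (u₁ u₂ : Fin m → F) (h : LinearIndependent F ![u₁, u₂])
    (T : Set (Fin m → F)) (hT : T = {0, u₁, u₂})
    (NC : Set ((Fin m → F) → F))
    (hNC : NC = {c | ∃ (l : (Fin m → F) →ₗ[F] F), l ≠ 0 ∧ ∃ b : F, c = fun x => l x + b}) :
    {c ∈ NC | {x ∈ T | c x = 0}.ncard = 3}.ncard = q ^ (m - 2) - 1 ∧
    {c ∈ NC | {x ∈ T | c x = 0}.ncard = 2}.ncard = 3 * q ^ (m - 2) * (q - 1) ∧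
    {c ∈ NC | {x ∈ T | c x = 0}.ncard = 1}.ncard = 3 * q ^ (m - 2) * (q - 1) ^ 2 ∧
    {c ∈ NC | {x ∈ T | c x = 0}.ncard = 0}.ncard
      = (q - 1) * (q ^ m - 2 * q ^ (m - 1) + q ^ (m - 2) - 1) := by
  have hp : AffineIndependent F ![0, u₁, u₂] := affineIndependent_vecCons_zero.2 h
  have hrange : T = Set.range ![0, u₁, u₂] := by
    simp only [hT, Matrix.range_cons, Matrix.range_empty, Set.union_empty, Set.singleton_union]
  simp only [hNC, hrange, ncard_nonconst_eq_ncard_affineMap hp.injective]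
  exact stmt_6_general (hq.trans Nat.card_eq_fintype_card.symm) (finrank_fin_fun F).symm hp
end

section
/- Let q ≥ 3 be a prime power, m ≥ 2, ℓ = (q−1)q^{m-1}, C = RM_q(1,m). For any 4-element subset T of V, the number of weight-ℓ codewords whose support contains T is one of the four values λ₁ = (q−1)(q^m − 3q^{m-1} + 3q^{m-2} − q^{m-3} − 1) (only when m ≥ 3), λ₂ = (q−1)(q^m − 3q^{m-1} + 2q^{m-2} − 1), λ₃ = (q−1)(q^m − 3q^{m-1} + 3q^{m-2} − 1), λ₄ = (q−1)(q^m − 3q^{m-1} − 1), depending only on the affine configuration of T. In particular C_ℓ is a 4-(q^m, ℓ, (λ₁,λ₂,λ₃,λ₄))-design. -/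
/-!
An affine function on `V` is a linear form on `V × F` read at the points `(x, 1)`. By
inclusion-exclusion and rank-nullity, the number of linear forms on an `n`-dimensional space that
vanish nowhere on a finite set `A` is `∑ (-1)^|B| q^(n - rank B)` over the subsets `B` of `A`. For
four points spanning distinct lines, every subset of at most two points has full rank, so only
the rank of `A` and the number of rank-two triples matter. By submodularity of the rank, two such
triples already force the rank of `A` to be two, and rank four excludes them; four cases remain.
The nonconstant affine functions are exactly the codewords of weight `(q - 1) q^(m - 1)`, so passing
to the shell only removes the `q - 1` nonzero constants.
-/

open Module Finset

section Rank

variable {F W : Type*} [Field F] [AddCommGroup W] [Module F W]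

lemma ncard_dual_forall_mem_eq_zero [Module.Finite F W] (A : Set W) :
    {φ : Dual F W | ∀ v ∈ A, φ v = 0}.ncard = Nat.card F ^ (finrank F W - A.finrank F) := by
  have rank_nullity := Subspace.finrank_add_finrank_dualAnnihilator_eq (Submodule.span F A)
  have annihilator_eq : {φ : Dual F W | ∀ v ∈ A, φ v = 0} =
      ((Submodule.span F A).dualAnnihilator : Set (Dual F W)) :=
    (Submodule.coe_dualAnnihilator_span A).symm
  rw [annihilator_eq, ← Nat.card_coe_set_eq, Set.finrank, ← rank_nullity, Nat.add_sub_cancel_left]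
  exact Module.natCard_eq_pow_finrank (K := F) (V := (Submodule.span F A).dualAnnihilator)

/-- The counting half of the Crapo–Rota critical theorem. -/
theorem ncard_dual_forall_mem_ne_zero [Finite F] [Module.Finite F W] (A : Finset W) :
    ({φ : Dual F W | ∀ v ∈ A, φ v ≠ 0}.ncard : ℤ) =
      ∑ B ∈ A.powerset,
        (-1) ^ #B * (Nat.card F : ℤ) ^ (finrank F W - (B : Set W).finrank F) := by
  classical
  have : Finite (Dual F W) := Module.finite_of_finite F
  have := Fintype.ofFinite (Dual F W)
  have nowhere_zero : {φ : Dual F W | ∀ v ∈ A, φ v ≠ 0} =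
      (A.inf fun v ↦ ({φ | φ v = 0} : Finset (Dual F W))ᶜ : Finset (Dual F W)) := by
    ext φ
    simp [mem_inf]
  have card_vanishing (B : Finset W) :
      #(B.inf fun v ↦ ({φ | φ v = 0} : Finset (Dual F W))) =
        {φ : Dual F W | ∀ v ∈ (B : Set W), φ v = 0}.ncard := by
    rw [← Set.ncard_coe_finset]
    congr 1
    ext φ
    simp [mem_inf]
  rw [nowhere_zero, Set.ncard_coe_finset, inclusion_exclusion_card_inf_compl]
  refine sum_congr rfl fun B _ ↦ ?_
  rw [card_vanishing, ncard_dual_forall_mem_eq_zero, Nat.cast_pow]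

lemma finrank_union_add_finrank_inter_le [Module.Finite F W] (A B : Set W) :
    (A ∪ B).finrank F + (A ∩ B).finrank F ≤ A.finrank F + B.finrank F := by
  have span_inter_le : Submodule.span F (A ∩ B) ≤ Submodule.span F A ⊓ Submodule.span F B :=
    le_inf (Submodule.span_mono Set.inter_subset_left) (Submodule.span_mono Set.inter_subset_right)
  calc (A ∪ B).finrank F + (A ∩ B).finrank F
      ≤ finrank F ↥(Submodule.span F A ⊔ Submodule.span F B) +
          finrank F ↥(Submodule.span F A ⊓ Submodule.span F B) := by
        rw [← Submodule.span_union]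
        exact Nat.add_le_add_left (Submodule.finrank_mono span_inter_le) _
    _ = A.finrank F + B.finrank F := Submodule.finrank_sup_add_finrank_inf_eq _ _

variable (F) in
/-- The vectors of `A` form a simple matroid: they are nonzero and span distinct lines, so that
every subset with at most two elements has full rank. -/
def IsSimpleConfiguration (A : Finset W) : Prop :=
  ∀ B ⊆ A, #B ≤ 2 → (B : Set W).finrank F = #B

open Classical in
variable (F) in
/-- The three-element subsets of `A` of rank two; projectively, its collinear triples. -/
noncomputable def collinearTriples (A : Finset W) : Finset (Finset W) :=
  {B ∈ A.powersetCard 3 | (B : Set W).finrank F = 2}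

variable {A B : Finset W}

lemma mem_collinearTriples :
    B ∈ collinearTriples F A ↔ (B ⊆ A ∧ #B = 3) ∧ (B : Set W).finrank F = 2 := by
  simp [collinearTriples]

lemma IsSimpleConfiguration.sum_powersetCard (hA : IsSimpleConfiguration F A) {j : ℕ}
    (hj : j ≤ 2) (f : ℕ → ℤ) :
    ∑ B ∈ A.powersetCard j, f ((B : Set W).finrank F) = (#A).choose j * f j := by
  rw [← card_powersetCard, ← nsmul_eq_mul]
  refine sum_eq_card_nsmul fun B hB ↦ ?_
  obtain ⟨hBA, hB⟩ := mem_powersetCard.mp hB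
  rw [hA B hBA (hB.trans_le hj), hB]

variable [Module.Finite F W]

lemma IsSimpleConfiguration.two_le_finrank (hA : IsSimpleConfiguration F A) (hBA : B ⊆ A)
    (hB : 2 ≤ #B) : 2 ≤ (B : Set W).finrank F := by
  obtain ⟨P, hPB, hP⟩ := exists_subset_card_eq hB
  rw [← hP, ← hA P (hPB.trans hBA) hP.le]
  exact Set.finrank_mono (mod_cast hPB)

lemma IsSimpleConfiguration.finrank_triple (hA : IsSimpleConfiguration F A) (hBA : B ⊆ A)
    (hB : #B = 3) : (B : Set W).finrank F = 2 ∨ (B : Set W).finrank F = 3 := by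
  have lower := hA.two_le_finrank hBA (by omega)
  have upper := finrank_span_finset_le_card (R := F) B
  omega

lemma IsSimpleConfiguration.collinearTriples_eq_of_finrank_eq_two (hA : IsSimpleConfiguration F A)
    (hrank : (A : Set W).finrank F = 2) : collinearTriples F A = A.powersetCard 3 := by
  refine filter_true_of_mem fun B hB ↦ ?_
  obtain ⟨hBA, hB⟩ := mem_powersetCard.mp hB
  have upper : (B : Set W).finrank F ≤ 2 := hrank ▸ Set.finrank_mono (mod_cast hBA)
  exact upper.antisymm (hA.two_le_finrank hBA (by omega))

lemma finrank_add_one_le_of_mem_collinearTriples (hB : B ∈ collinearTriples F A) :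
    (A : Set W).finrank F + 1 ≤ #A := by
  classical
  obtain ⟨⟨hBA, hB⟩, hrank⟩ := mem_collinearTriples.mp hB
  have submodular := finrank_union_add_finrank_inter_le (F := F) (B : Set W) (A \ B : Finset W)
  have rest := finrank_span_finset_le_card (R := F) (A \ B)
  rw [← coe_union, union_sdiff_of_subset hBA] at submodular
  have card_rest := card_sdiff_add_card_eq_card hBA
  omega

/-- Two distinct triples in a four-element set share two points, hence the line they span. -/
lemma IsSimpleConfiguration.card_collinearTriples_le_one (hA : IsSimpleConfiguration F A)
    (hcard : #A = 4) (hrank : (A : Set W).finrank F ≠ 2) : #(collinearTriples F A) ≤ 1 := by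
  classical
  refine card_le_one.mpr fun B hB D hD ↦ by_contra fun hne ↦ hrank ?_
  obtain ⟨⟨hBA, hBcard⟩, hBrank⟩ := mem_collinearTriples.mp hB
  obtain ⟨⟨hDA, hDcard⟩, hDrank⟩ := mem_collinearTriples.mp hD
  have hunion : B ∪ D = A := by
    refine eq_of_subset_of_card_le (union_subset hBA hDA) ?_
    by_contra! hlt
    have hBU : B = B ∪ D := eq_of_subset_of_card_le subset_union_left (by omega)
    have hDU : D = B ∪ D := eq_of_subset_of_card_le subset_union_right (by omega)
    exact hne (hBU.trans hDU.symm)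
  have hinter : 2 ≤ #(B ∩ D) := by
    have card_union_inter := card_union_add_card_inter B D
    rw [hunion] at card_union_inter
    omega
  have submodular := finrank_union_add_finrank_inter_le (F := F) (B : Set W) D
  rw [← coe_union, ← coe_inter, hunion] at submodular
  have inter_rank := hA.two_le_finrank (inter_subset_left.trans hBA) hinter
  have lower := hA.two_le_finrank Subset.rfl (by omega)
  omega

lemma IsSimpleConfiguration.sum_powersetCard_three (hA : IsSimpleConfiguration F A) (f : ℕ → ℤ) :
    ∑ B ∈ A.powersetCard 3, f ((B : Set W).finrank F) =
      #(collinearTriples F A) * f 2 + ((#A).choose 3 - #(collinearTriples F A)) * f 3 := by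
  classical
  have collinear : ∑ B ∈ collinearTriples F A, f ((B : Set W).finrank F) =
      #(collinearTriples F A) * f 2 := by
    rw [← nsmul_eq_mul]
    exact sum_eq_card_nsmul fun B hB ↦ by rw [(mem_collinearTriples.mp hB).2]
  have hsub : collinearTriples F A ⊆ A.powersetCard 3 := filter_subset _ _
  have independent : ∑ B ∈ A.powersetCard 3 \ collinearTriples F A, f ((B : Set W).finrank F) =
      ((#A).choose 3 - #(collinearTriples F A)) * f 3 := by
    rw [← card_powersetCard, ← cast_card_sdiff hsub, ← nsmul_eq_mul]
    refine sum_eq_card_nsmul fun B hB ↦ ?_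
    obtain ⟨hBA, hncol⟩ := mem_sdiff.mp hB
    have hBA := mem_powersetCard.mp hBA
    rw [(hA.finrank_triple hBA.1 hBA.2).resolve_left fun h ↦
      hncol (mem_collinearTriples.mpr ⟨hBA, h⟩)]
  rw [← sum_sdiff hsub, collinear, independent, add_comm]

lemma IsSimpleConfiguration.ncard_dual_of_card_eq_four [Finite F]
    (hA : IsSimpleConfiguration F A) (hcard : #A = 4) {q : ℤ} (hq : q = Nat.card F)
    {n : ℕ} (hn : n = finrank F W) :
    ({φ : Dual F W | ∀ v ∈ A, φ v ≠ 0}.ncard : ℤ) =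
      q ^ n - 4 * q ^ (n - 1) + (6 - #(collinearTriples F A)) * q ^ (n - 2)
        - (4 - #(collinearTriples F A)) * q ^ (n - 3) + q ^ (n - (A : Set W).finrank F) := by
  have signed_sum (j : ℕ) :
      ∑ B ∈ A.powersetCard j, (-1) ^ #B * q ^ (n - (B : Set W).finrank F) =
        (-1) ^ j * ∑ B ∈ A.powersetCard j, q ^ (n - (B : Set W).finrank F) := by
    rw [mul_sum]
    exact sum_congr rfl fun B hB ↦ by rw [(mem_powersetCard.mp hB).2]
  have small_sum (j : ℕ) (hj : j ≤ 2) := hA.sum_powersetCard hj fun r ↦ q ^ (n - r)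
  have triple_sum := hA.sum_powersetCard_three fun r ↦ q ^ (n - r)
  have whole_sum : ∑ B ∈ A.powersetCard 4, q ^ (n - (B : Set W).finrank F) =
      q ^ (n - (A : Set W).finrank F) := by
    rw [← hcard, powersetCard_self, sum_singleton]
  rw [ncard_dual_forall_mem_ne_zero, ← hq, ← hn, sum_powerset, hcard]
  simp only [signed_sum, sum_range_succ, range_zero, sum_empty, small_sum 0 (by omega),
    small_sum 1 (by omega), small_sum 2 le_rfl, triple_sum, whole_sum, hcard]
  norm_num [Nat.choose]
  ring

lemma IsSimpleConfiguration.ncard_dual_cases [Finite F] (hA : IsSimpleConfiguration F A)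
    (hcard : #A = 4) {q N : ℤ} (hq : q = Nat.card F) {m : ℕ} (hm : m + 1 = finrank F W)
    (hN : N = {φ : Dual F W | ∀ v ∈ A, φ v ≠ 0}.ncard) :
    (3 ≤ m ∧ N = (q - 1) * (q ^ m - 3 * q ^ (m - 1) + 3 * q ^ (m - 2) - q ^ (m - 3))) ∨
    N = (q - 1) * (q ^ m - 3 * q ^ (m - 1) + 2 * q ^ (m - 2)) ∨
    N = (q - 1) * (q ^ m - 3 * q ^ (m - 1) + 3 * q ^ (m - 2)) ∨
    N = (q - 1) * (q ^ m - 3 * q ^ (m - 1)) := by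
  have count := hA.ncard_dual_of_card_eq_four hcard hq hm
  have rank_lower := hA.two_le_finrank Subset.rfl (by omega)
  have rank_upper := finrank_span_finset_le_card (R := F) A
  have rank_le : (A : Set W).finrank F ≤ m + 1 := hm ▸ Submodule.finrank_le _
  rw [← hN] at count
  rcases (by omega : (A : Set W).finrank F = 2 ∨ (A : Set W).finrank F = 3 ∨
    (A : Set W).finrank F = 4) with rank_eq | rank_eq | rank_eq
  · obtain ⟨k, rfl⟩ : ∃ k, m = k + 1 := ⟨m - 1, by omega⟩
    have triples_eq : #(collinearTriples F A) = 4 := by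
      rw [hA.collinearTriples_eq_of_finrank_eq_two rank_eq, card_powersetCard, hcard]
      rfl
    refine Or.inr <| Or.inr <| Or.inr ?_
    simp only [count, triples_eq, rank_eq, Nat.add_sub_cancel]
    push_cast
    ring
  · obtain ⟨k, rfl⟩ : ∃ k, m = k + 2 := ⟨m - 2, by omega⟩
    have triples_le := hA.card_collinearTriples_le_one hcard (by omega)
    refine Or.inr ?_
    rcases Nat.le_one_iff_eq_zero_or_eq_one.mp triples_le with triples_eq | triples_eq
    · refine Or.inr <| Or.inl ?_
      simp only [count, triples_eq, rank_eq, Nat.add_sub_cancel]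
      push_cast
      ring
    · refine Or.inl ?_
      simp only [count, triples_eq, rank_eq, Nat.add_sub_cancel]
      push_cast
      ring
  · obtain ⟨k, rfl⟩ : ∃ k, m = k + 3 := ⟨m - 3, by omega⟩
    have triples_eq : #(collinearTriples F A) = 0 := by
      refine card_eq_zero.mpr <| eq_empty_of_forall_notMem fun B hB ↦ ?_
      have rank_lt := finrank_add_one_le_of_mem_collinearTriples hB
      omega
    refine Or.inl ⟨by omega, ?_⟩
    simp only [count, triples_eq, rank_eq, Nat.add_sub_cancel]
    push_cast
    ring

end Rank

section AffineFunctions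

variable {F V : Type*} [Field F] [AddCommGroup V] [Module F V]

variable (F V) in
/-- The first-order generalized Reed–Muller code: the affine functions on `V`. -/
def affineCode : Set (V → F) :=
  {c | ∃ (l : V →ₗ[F] F) (b : F), c = fun x ↦ l x + b}

variable (F V) in
/-- The embedding of `V` into `V × F` as the affine hyperplane at height one, which turns affine
functions on `V` into linear forms. -/
@[simps]
def homogeneousPoint : V ↪ V × F where
  toFun x := (x, 1)
  inj' _ _ h := congrArg Prod.fst h

lemma linearIndepOn_homogeneousPoint_pair {x y : V} (hxy : x ≠ y) :
    LinearIndepOn F (homogeneousPoint F V) {x, y} := by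
  have hx : homogeneousPoint F V x ≠ 0 := fun h ↦ one_ne_zero (congrArg Prod.snd h)
  refine (linearIndepOn_pair_iff _ hxy hx).mpr fun r h ↦ hxy ?_
  have hr : r = 1 := by simpa using congrArg Prod.snd h
  simpa [hr] using congrArg Prod.fst h

lemma isSimpleConfiguration_map_homogeneousPoint (T : Finset V) :
    IsSimpleConfiguration F (T.map (homogeneousPoint F V)) := by
  classical
  intro B hBT hB
  obtain ⟨S, -, rfl⟩ := subset_map_iff.mp hBT
  rw [card_map] at hB
  have indep : LinearIndepOn F (homogeneousPoint F V) S := by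
    rcases (by omega : #S = 0 ∨ #S = 1 ∨ #S = 2) with h | h | h
    · simp [card_eq_zero.mp h]
    · obtain ⟨x, rfl⟩ := card_eq_one.mp h
      simp
    · obtain ⟨x, y, hxy, rfl⟩ := card_eq_two.mp h
      simpa using linearIndepOn_homogeneousPoint_pair hxy
  refine finrank_span_finset_eq_card ?_
  rw [coe_map]
  exact indep.id_image

lemma ncard_affineCode_forall_mem_ne_zero (T : Finset V) :
    {c ∈ affineCode F V | ∀ x ∈ T, c x ≠ 0}.ncard =
      {φ : Dual F (V × F) | ∀ v ∈ T.map (homogeneousPoint F V), φ v ≠ 0}.ncard := by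
  symm
  refine Set.ncard_congr (fun φ _ x ↦ φ (homogeneousPoint F V x)) ?_ ?_ ?_
  · intro φ hφ
    refine ⟨⟨φ ∘ₗ LinearMap.inl F V F, φ (0, 1), funext fun x ↦ ?_⟩,
      fun x hx ↦ hφ _ (mem_map_of_mem _ hx)⟩
    simp [← map_add]
  · intro φ ψ _ _ h
    have heq (x : V) : φ (x, 1) = ψ (x, 1) := congrFun h x
    refine LinearMap.prod_ext (LinearMap.ext fun x ↦ ?_) (LinearMap.ext_ring (heq 0))
    have eq_sub (χ : Dual F (V × F)) : χ (x, 0) = χ (x, 1) - χ (0, 1) := by simp [← map_sub]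
    simp [eq_sub, heq]
  · rintro _ ⟨⟨l, b, rfl⟩, h⟩
    refine ⟨l.coprod (LinearMap.toSpanSingleton F F b), ?_, ?_⟩
    · simpa using h
    · simp

variable [Finite F] [Module.Finite F V]

lemma ncard_support_linear_add_const {l : V →ₗ[F] F} (hl : l ≠ 0) (b : F) :
    {x | l x + b ≠ 0}.ncard = (Nat.card F - 1) * Nat.card F ^ (finrank F V - 1) := by
  have : Finite V := Module.finite_of_finite F
  obtain ⟨x₀, hx₀⟩ := LinearMap.surjective hl (-b)
  have zeros_eq : {x | l x + b = 0} = (x₀ + ·) '' (LinearMap.ker l : Set V) := by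
    ext x
    simp [hx₀, add_comm]
  have ker_finrank := Module.Dual.finrank_ker_add_one_of_ne_zero hl
  have zeros_card : {x | l x + b = 0}.ncard = Nat.card F ^ (finrank F V - 1) := by
    rw [zeros_eq, Set.ncard_image_of_injective _ (add_right_injective x₀), ← ker_finrank,
      Nat.add_sub_cancel]
    exact Module.natCard_eq_pow_finrank (K := F)
  have split := Set.ncard_add_ncard_compl {x | l x + b = 0}
  rw [zeros_card, Module.natCard_eq_pow_finrank (K := F) (V := V), ← ker_finrank,
    Nat.add_sub_cancel, pow_succ'] at split
  rw [← ker_finrank, Nat.add_sub_cancel, Nat.sub_one_mul]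
  exact Nat.eq_sub_of_add_eq' split

lemma ncard_support_const_ne [Nontrivial V] {b : F} (hb : b ≠ 0) :
    {x : V | Function.const V b x ≠ 0}.ncard ≠
      (Nat.card F - 1) * Nat.card F ^ (finrank F V - 1) := by
  have weight_const : {x : V | Function.const V b x ≠ 0}.ncard = Nat.card F ^ finrank F V := by
    simp only [Function.const_apply, ne_eq, hb, not_false_eq_true, Set.ofPred_true,
      Set.ncard_univ]
    exact Module.natCard_eq_pow_finrank (K := F)
  rw [weight_const, ← mul_pow_sub_one finrank_pos.ne']
  exact (Nat.mul_lt_mul_of_pos_right (Nat.sub_one_lt Nat.card_pos.ne')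
    (Nat.pow_pos Nat.card_pos)).ne'

lemma shell_eq_sdiff_const [Nontrivial V] {T : Finset V} (hT : T.Nonempty) :
    {c ∈ affineCode F V | {x | c x ≠ 0}.ncard =
        (Nat.card F - 1) * Nat.card F ^ (finrank F V - 1) ∧ ∀ x ∈ T, c x ≠ 0} =
      {c ∈ affineCode F V | ∀ x ∈ T, c x ≠ 0} \ Function.const V '' {b : F | b ≠ 0} := by
  ext c
  constructor
  · rintro ⟨hc, hwt, hcT⟩
    refine ⟨⟨hc, hcT⟩, ?_⟩
    rintro ⟨b, hb, rfl⟩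
    exact ncard_support_const_ne hb hwt
  · rintro ⟨⟨⟨l, b, rfl⟩, hcT⟩, hconst⟩
    refine ⟨⟨l, b, rfl⟩, ncard_support_linear_add_const ?_ b, hcT⟩
    rintro rfl
    obtain ⟨x, hx⟩ := hT
    exact hconst ⟨b, by simpa using hcT x hx, by ext; simp⟩

lemma ncard_shell_add_ncard_const [Nontrivial V] {T : Finset V} (hT : T.Nonempty) :
    {c ∈ affineCode F V | {x | c x ≠ 0}.ncard =
        (Nat.card F - 1) * Nat.card F ^ (finrank F V - 1) ∧ ∀ x ∈ T, c x ≠ 0}.ncard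
        + (Nat.card F - 1) =
      {φ : Dual F (V × F) | ∀ v ∈ T.map (homogeneousPoint F V), φ v ≠ 0}.ncard := by
  have : Finite V := Module.finite_of_finite F
  have card_const : (Function.const V '' {b : F | b ≠ 0}).ncard = Nat.card F - 1 := by
    rw [Set.ncard_image_of_injective _ Function.const_injective]
    exact (Set.ncard_compl {(0 : F)}).trans (by rw [Set.ncard_singleton])
  rw [shell_eq_sdiff_const hT, ← card_const, Set.ncard_sdiff_add_ncard_of_subset,
    ncard_affineCode_forall_mem_ne_zero]
  rintro _ ⟨b, hb, rfl⟩
  exact ⟨⟨0, b, by ext; simp⟩, fun _ _ ↦ hb⟩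

end AffineFunctions

lemma eq_mul_sub_one_of_add_eq {q N X : ℕ} (hq : 1 ≤ q)
    (h : ((N + (q - 1) : ℕ) : ℤ) = (q - 1) * X) : N = (q - 1) * (X - 1) := by
  rw [← Nat.cast_pred hq] at h
  rw [Nat.mul_sub_one]
  exact Nat.eq_sub_of_add_eq (mod_cast h)

theorem stmt_17_general {F V : Type*} [Field F] [Finite F] [AddCommGroup V] [Module F V]
    [Module.Finite F V] (q m : ℕ) (hq : q = Nat.card F) (hq3 : 3 ≤ q) (hm : m = finrank F V)
    (T : Finset V) (hT : #T = 4) (N : ℕ)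
    (hN : N = {c ∈ affineCode F V |
      {x | c x ≠ 0}.ncard = (q - 1) * q ^ (m - 1) ∧ ∀ x ∈ T, c x ≠ 0}.ncard) :
    (3 ≤ m ∧ N = (q - 1) * (q ^ m - 3 * q ^ (m - 1) + 3 * q ^ (m - 2) - q ^ (m - 3) - 1)) ∨
    N = (q - 1) * (q ^ m - 3 * q ^ (m - 1) + 2 * q ^ (m - 2) - 1) ∨
    N = (q - 1) * (q ^ m - 3 * q ^ (m - 1) + 3 * q ^ (m - 2) - 1) ∨
    N = (q - 1) * (q ^ m - 3 * q ^ (m - 1) - 1) := by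
  have : Nontrivial V :=
    Set.nontrivial_of_nontrivial (one_lt_card_iff_nontrivial.mp (by omega : 1 < #T))
  have shell_card := ncard_shell_add_ncard_const (F := F) (card_pos.mp (by omega : 0 < #T))
  rw [← hq, ← hm, ← hN] at shell_card
  have le_pow : 3 * q ^ (m - 1) ≤ q ^ m := by
    rw [← mul_pow_sub_one (hm ▸ (finrank_pos (R := F)).ne' : m ≠ 0) q]
    gcongr
  have pow_le : q ^ (m - 3) ≤ q ^ m - 3 * q ^ (m - 1) + 3 * q ^ (m - 2) := by
    have : q ^ (m - 3) ≤ q ^ (m - 2) := Nat.pow_le_pow_right (by omega) (by omega)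
    omega
  have cases := (isSimpleConfiguration_map_homogeneousPoint (F := F) T).ncard_dual_cases
    ((card_map _).trans hT) (congrArg Nat.cast hq) (m := m) (by simp [hm])
    (congrArg Nat.cast shell_card)
  refine cases.imp (.imp_right fun h ↦ eq_mul_sub_one_of_add_eq (by omega) ?_) <|
    .imp (fun h ↦ eq_mul_sub_one_of_add_eq (by omega) ?_) <|
    .imp (fun h ↦ eq_mul_sub_one_of_add_eq (by omega) ?_)
      fun h ↦ eq_mul_sub_one_of_add_eq (by omega) ?_
  all_goals simpa [Nat.cast_sub le_pow, Nat.cast_sub pow_le] using h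

/-- The shell of weight `(q-1)q^(m-1)` of `RM_q(1,m)` is a
`4-(q^m, ℓ, (λ₁, λ₂, λ₃, λ₄))`-design: every 4-subset of `V` is contained in the
support of exactly `λ₁`, `λ₂`, `λ₃` or `λ₄` weight-`ℓ` codewords (the value `λ₁`
occurring only when `m ≥ 3`). -/
theorem stmt_17 (F : Type) [Field F] [Fintype F] (q m : ℕ) (hq : q = Fintype.card F)
    (hq3 : 3 ≤ q) (hm : 2 ≤ m)
    (C : Set ((Fin m → F) → F))
    (hC : C = {c | ∃ (l : (Fin m → F) →ₗ[F] F) (b : F), c = fun x => l x + b})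
    (wt : ((Fin m → F) → F) → ℕ)
    (hwt : ∀ c, wt c = {x | c x ≠ 0}.ncard)
    (ℓ : ℕ) (hℓ : ℓ = (q - 1) * q ^ (m - 1))
    (T : Finset (Fin m → F)) (hT : T.card = 4) :
    (3 ≤ m ∧ {c ∈ C | wt c = ℓ ∧ ∀ x ∈ T, c x ≠ 0}.ncard
        = (q - 1) * (q ^ m - 3 * q ^ (m - 1) + 3 * q ^ (m - 2) - q ^ (m - 3) - 1)) ∨
    {c ∈ C | wt c = ℓ ∧ ∀ x ∈ T, c x ≠ 0}.ncard
        = (q - 1) * (q ^ m - 3 * q ^ (m - 1) + 2 * q ^ (m - 2) - 1) ∨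
    {c ∈ C | wt c = ℓ ∧ ∀ x ∈ T, c x ≠ 0}.ncard
        = (q - 1) * (q ^ m - 3 * q ^ (m - 1) + 3 * q ^ (m - 2) - 1) ∨
    {c ∈ C | wt c = ℓ ∧ ∀ x ∈ T, c x ≠ 0}.ncard
        = (q - 1) * (q ^ m - 3 * q ^ (m - 1) - 1) := by
  simp only [hwt]
  subst hC hℓ
  exact stmt_17_general q m (hq.trans Nat.card_eq_fintype_card.symm) hq3 (by simp) T hT _ rfl
end
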